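/- arXiv:2105.10677 — 2 statements merged into one kernel-verified Lean document; each statement's English description precedes it below -/
import Mathlib

section
/- Let 1 ≤ p < q ≤ m with 1 < q − p < m − 1. An anonymous (p, q)-PFBR φ : [D_≺(p, q)]^n → Δ(A) is decomposable if and only if its probabilistic ballots satisfy per-capita monotonicity w.r.t. a_p and a_q. -/
open Finset

noncomputable section

/-- A preference is a linear order over the `m` alternatives, represented as a bijection
from rank positions (0-based: position `0` is the top) to alternatives. -/
abbrev Pref (m : ℕ) := Fin m ≃ Fin m

namespace PFBRPaper

variable {m n : ℕ}

/-- `a` is strictly preferred to `b` under `P`. -/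
def Prefers (P : Pref m) (a b : Fin m) : Prop := P.symm a < P.symm b

/-- The last alternative `a_m` (0-based index `m-1`). -/
def lastAlt (m : ℕ) [NeZero m] : Fin m :=
  ⟨m - 1, Nat.sub_lt (Nat.pos_of_ne_zero (NeZero.ne m)) Nat.one_pos⟩

/-- Every alternative is top-ranked by some preference in the domain. -/
def MinimallyRich [NeZero m] (D : Set (Pref m)) : Prop :=
  ∀ a : Fin m, ∃ P ∈ D, P 0 = a

/-- The preference ranking `a_m` first, ..., `a_1` last. -/
def revPref (m : ℕ) : Pref m :=
  ⟨Fin.rev, Fin.rev, fun i => Fin.rev_rev i, fun i => Fin.rev_rev i⟩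

/-- Diversity, with the labeling convention: the domain contains the preference ranking
`a_1` first, `a_2` second, ..., `a_m` last (the identity), together with its
complete reversal. -/
def Diversity (D : Set (Pref m)) : Prop :=
  Equiv.refl (Fin m) ∈ D ∧ revPref m ∈ D

/-- Two preferences are adjacent: the alternatives at two contiguous rank positions are
swapped and everything else is unchanged. -/
def Adjacent (P P' : Pref m) : Prop :=
  P ≠ P' ∧ ∃ k : ℕ, ∃ hk : k + 1 < m,
    P ⟨k, Nat.lt_of_succ_lt hk⟩ = P' ⟨k + 1, hk⟩ ∧
    P ⟨k + 1, hk⟩ = P' ⟨k, Nat.lt_of_succ_lt hk⟩ ∧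
    ∀ l : Fin m, (l : ℕ) ≠ k → (l : ℕ) ≠ k + 1 → P l = P' l

/-- `π 0, …, π (v-1)` is a path in `D` connecting `P` and `P'`. -/
def IsPath (D : Set (Pref m)) (P P' : Pref m) (π : ℕ → Pref m) (v : ℕ) : Prop :=
  1 ≤ v ∧ (∀ i < v, π i ∈ D) ∧
  (∀ i < v, ∀ j < v, π i = π j → i = j) ∧
  π 0 = P ∧ π (v - 1) = P' ∧
  ∀ i, i + 1 < v → Adjacent (π i) (π (i + 1))

/-- The path `π 0, …, π (v-1)` has no `{a,b}`-restoration: the relative ranking of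
`a` and `b` switches at most once along the path. -/
def NoRestoration (π : ℕ → Pref m) (v : ℕ) (a b : Fin m) : Prop :=
  ∀ i j k : ℕ, i < j → j < k → k < v →
    ¬(Prefers (π i) a b ∧ Prefers (π j) b a ∧ Prefers (π k) a b) ∧
    ¬(Prefers (π i) b a ∧ Prefers (π j) a b ∧ Prefers (π k) b a)

def NoRestorationDomain (D : Set (Pref m)) : Prop :=
  ∀ P ∈ D, ∀ P' ∈ D, P ≠ P' → ∀ a b : Fin m,
    ∃ π v, IsPath D P P' π v ∧ NoRestoration π v a b

def RegularDomain [NeZero m] (D : Set (Pref m)) : Prop :=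
  MinimallyRich D ∧ Diversity D ∧ NoRestorationDomain D

/-- `a ≈ b`: the two alternatives are strongly connected in the domain `D`. -/
def StronglyConnected [NeZero m] (D : Set (Pref m)) (a b : Fin m) : Prop :=
  a ≠ b ∧ ∃ P ∈ D, ∃ P' ∈ D,
    P 0 = a ∧ P 1 = b ∧ P' 0 = b ∧ P' 1 = a ∧
    ∀ k : Fin m, 2 ≤ (k : ℕ) → P k = P' k

/-- `l` is a vertex-path of the graph `G_≈^B(D)`. -/
def IsVertexPathOn [NeZero m] (D : Set (Pref m)) (B : Set (Fin m)) (l : List (Fin m)) : Prop :=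
  l ≠ [] ∧ l.Nodup ∧ (∀ x ∈ l, x ∈ B) ∧ l.Chain' (StronglyConnected D)

/-- `l` is a vertex-path of `G_≈^B(D)` connecting `a` and `b`. -/
def VertexPathBetween [NeZero m] (D : Set (Pref m)) (B : Set (Fin m)) (a b : Fin m)
    (l : List (Fin m)) : Prop :=
  IsVertexPathOn D B l ∧ l.head? = some a ∧ l.getLast? = some b

/-- `a` is a leaf of the subgraph `G_≈^B(D)`. -/
def IsLeaf [NeZero m] (D : Set (Pref m)) (B : Set (Fin m)) (a : Fin m) : Prop :=
  a ∈ B ∧ ∃! b : Fin m, b ∈ B ∧ StronglyConnected D a b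

/-- Single-peakedness w.r.t. the natural order. -/
def SinglePeaked [NeZero m] (P : Pref m) : Prop :=
  ∀ a b : Fin m, ((a < b ∧ b < P 0) ∨ (P 0 < b ∧ b < a)) → Prefers P b a

/-- A `(p,q)`-hybrid preference (thresholds `p < q`, 0-based). -/
def IsHybridPref [NeZero m] (p q : Fin m) (P : Pref m) : Prop :=
  (∀ r s : Fin m, ((r ≤ p ∧ s ≤ p) ∨ (q ≤ r ∧ q ≤ s)) →
      ((r < s ∧ s < P 0) ∨ (P 0 < s ∧ s < r)) → Prefers P s r) ∧
  (P 0 ≤ p → ∀ l : Fin m, p ≤ l → l ≤ q → l ≠ p → Prefers P p l) ∧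
  (q ≤ P 0 → ∀ l : Fin m, p ≤ l → l ≤ q → l ≠ q → Prefers P q l)

/-- The `(p,q)`-hybrid domain of all `(p,q)`-hybrid preferences. -/
def hybridDomain [NeZero m] (p q : Fin m) : Set (Pref m) := {P | IsHybridPref p q P}

/-- `D` is a `(p,q)`-hybrid* domain. -/
def IsHybridStar [NeZero m] (D : Set (Pref m)) (p q : Fin m) : Prop :=
  D ⊆ hybridDomain p q ∧
  (∀ k : Fin m, k ≠ 0 → k ≠ lastAlt m →
      ∃ l, VertexPathBetween D Set.univ 0 (lastAlt m) l ∧ k ∈ l) ∧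
  ((p : ℕ) + 1 < (q : ℕ) → ∀ a : Fin m, ¬ IsLeaf D (Set.Icc p q) a)

/-- A lottery over the alternatives. -/
def Lottery (m : ℕ) : Type :=
  {f : Fin m → ℝ // (∀ a, 0 ≤ f a) ∧ ∑ a, f a = 1}

/-- The probability that a lottery assigns to a set of alternatives. -/
def Lottery.prob (lam : Lottery m) (B : Finset (Fin m)) : ℝ := ∑ a ∈ B, lam.1 a

/-- The support of a lottery. -/
def Lottery.supp (lam : Lottery m) : Finset (Fin m) :=
  Finset.univ.filter (fun a => 0 < lam.1 a)

/-- The degenerate lottery on `a`. -/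
def degLottery (a : Fin m) : Lottery m :=
  ⟨fun b => if b = a then 1 else 0,
   fun b => by by_cases h : b = a <;> simp [h],
   by simp⟩

/-- A profile of preferences drawn from the domain `D`. -/
abbrev Profile (D : Set (Pref m)) (n : ℕ) := Fin n → D

/-- The top-ranked alternative of a preference in the domain. -/
def topOf [NeZero m] {D : Set (Pref m)} (P : D) : Fin m := P.1 0

def Unanimous [NeZero m] {D : Set (Pref m)} (φ : Profile D n → Lottery m) : Prop :=
  ∀ (P : Profile D n) (a : Fin m), (∀ i, topOf (P i) = a) → φ P = degLottery a

/-- The total probability of the `k` top-ranked alternatives of `P` under `lam`. -/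
def topSum (lam : Lottery m) (P : Pref m) (k : ℕ) : ℝ :=
  ∑ t ∈ Finset.univ.filter (fun t : Fin m => (t : ℕ) < k), lam.1 (P t)

/-- Strategy-proofness: truth-telling first-order stochastically dominates any unilateral
misrepresentation. -/
def StrategyProof {D : Set (Pref m)} (φ : Profile D n → Lottery m) : Prop :=
  ∀ (i : Fin n) (P : Profile D n) (Pi' : D) (k : ℕ), k ≤ m →
    topSum (φ (Function.update P i Pi')) (P i).1 k ≤ topSum (φ P) (P i).1 k

def TopsOnly [NeZero m] {D : Set (Pref m)} (φ : Profile D n → Lottery m) : Prop :=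
  ∀ P P' : Profile D n, (∀ i, topOf (P i) = topOf (P' i)) → φ P = φ P'

def Anonymous {D : Set (Pref m)} (φ : Profile D n → Lottery m) : Prop :=
  ∀ (P : Profile D n) (σ : Equiv.Perm (Fin n)), φ (P ∘ σ) = φ P

/-- The interval `[a_k, a_m]`. -/
def upSet (k : Fin m) : Finset (Fin m) := Finset.univ.filter (fun a => k ≤ a)

/-- The interval `[a_1, a_k]`. -/
def downSet (k : Fin m) : Finset (Fin m) := Finset.univ.filter (fun a => a ≤ k)

/-- The interval `[a_p, a_q]`. -/
def midSet (p q : Fin m) : Finset (Fin m) := Finset.univ.filter (fun a => p ≤ a ∧ a ≤ q)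

/-- `S(k,P)`: the voters whose preference top is not to the left of `a_k`. -/
def voterSet [NeZero m] {D : Set (Pref m)} (P : Profile D n) (k : Fin m) : Finset (Fin n) :=
  Finset.univ.filter (fun i => k ≤ topOf (P i))

/-- `β_{S(k,P)}([a_k, a_m])`, with the convention that it is `0` for `k = m`. -/
def tailProb [NeZero m] {D : Set (Pref m)} (β : Finset (Fin n) → Lottery m)
    (P : Profile D n) (k : ℕ) : ℝ :=
  if h : k < m then (β (voterSet P ⟨k, h⟩)).prob (upSet ⟨k, h⟩) else 0

def BallotUnanimity [NeZero m] (β : Finset (Fin n) → Lottery m) : Prop :=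
  β Finset.univ = degLottery (lastAlt m) ∧ β ∅ = degLottery 0

def BallotMonotone (β : Finset (Fin n) → Lottery m) : Prop :=
  ∀ S T : Finset (Fin n), S ⊂ T →
    ∀ k : Fin m, (β S).prob (upSet k) ≤ (β T).prob (upSet k)

/-- `φ` is a probabilistic fixed ballot rule with probabilistic ballots `β`. -/
def IsPFBRWith [NeZero m] {D : Set (Pref m)} (φ : Profile D n → Lottery m)
    (β : Finset (Fin n) → Lottery m) : Prop :=
  BallotUnanimity β ∧ BallotMonotone β ∧
  ∀ (P : Profile D n) (k : Fin m),
    (φ P).1 k = tailProb β P (k : ℕ) - tailProb β P ((k : ℕ) + 1)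

def IsPFBR [NeZero m] {D : Set (Pref m)} (φ : Profile D n → Lottery m) : Prop :=
  ∃ β, IsPFBRWith φ β

/-- The constrained random-dictatorship condition w.r.t. `a_p` and `a_q`. -/
def ConstrainedRD (p q : Fin m) (β : Finset (Fin n) → Lottery m) : Prop :=
  ∃ ε : Fin n → ℝ, (∀ i, 0 ≤ ε i) ∧ ∑ i, ε i = 1 ∧
    ∀ S : Finset (Fin n),
      (β S).prob (upSet q) = ∑ i ∈ S, ε i ∧
      (β S).prob (downSet p) = ∑ i ∈ Sᶜ, ε i

/-- The constrained random-dictatorship condition w.r.t. `a_p` and `a_q` with every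
conditional dictatorial coefficient equal to `1/n`. -/
def ConstrainedRDUniform (p q : Fin m) (β : Finset (Fin n) → Lottery m) : Prop :=
  ∀ S : Finset (Fin n),
    (β S).prob (upSet q) = (S.card : ℝ) / (n : ℝ) ∧
    (β S).prob (downSet p) = ((Sᶜ : Finset (Fin n)).card : ℝ) / (n : ℝ)

/-- Anonymity at the level of probabilistic ballots. -/
def BallotAnonymous (β : Finset (Fin n) → Lottery m) : Prop :=
  ∀ S S' : Finset (Fin n), S.Nonempty → S'.Nonempty → S.card = S'.card → β S = β S'

/-- Per-capita monotonicity w.r.t. `a_p` and `a_q`. -/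
def PerCapitaMonotone (p q : Fin m) (β : Finset (Fin n) → Lottery m) : Prop :=
  ∀ S S' : Finset (Fin n), S.Nonempty → S ⊂ S' → S' ⊂ Finset.univ →
    (∀ t : Fin m, q ≤ t →
      (β S).prob (upSet t) / (S.card : ℝ) ≤ (β S').prob (upSet t) / (S'.card : ℝ)) ∧
    (∀ s : Fin m, s ≤ p →
      (β Sᶜ).prob (downSet s) / (S.card : ℝ) ≤ (β S'ᶜ).prob (downSet s) / (S'.card : ℝ))

/-- Decomposability: `φ` is a mixture of finitely many unanimous and strategy-proof
deterministic social choice functions. -/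
def Decomposable [NeZero m] {D : Set (Pref m)} (φ : Profile D n → Lottery m) : Prop :=
  ∃ (r : ℕ) (f : Fin r → (Profile D n → Fin m)) (α : Fin r → ℝ),
    (∀ k, 0 < α k) ∧ ∑ k, α k = 1 ∧
    (∀ k, Unanimous (fun P => degLottery (f k P)) ∧
          StrategyProof (fun P => degLottery (f k P))) ∧
    ∀ (P : Profile D n) (a : Fin m),
      (φ P).1 a = ∑ k, α k * (if f k P = a then 1 else 0)

/-- `b̂_S^R`: the `≺`-minimum of `supp(β_S) ∩ R` (with the convention `b̂_N^R = a_m`). -/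
def bR [NeZero m] (β : Finset (Fin n) → Lottery m) (q : Fin m) (S : Finset (Fin n)) : Fin m :=
  if h : ((β S).supp ∩ upSet q).Nonempty then ((β S).supp ∩ upSet q).min' h else lastAlt m

/-- `b̂_S^L`: the `≺`-maximum of `supp(β_S) ∩ L` (with the convention `b̂_∅^L = a_1`). -/
def bL [NeZero m] (β : Finset (Fin n) → Lottery m) (p : Fin m) (S : Finset (Fin n)) : Fin m :=
  if h : ((β S).supp ∩ downSet p).Nonempty then ((β S).supp ∩ downSet p).max' h else 0

/-- `α = min over nonempty S ⊂ N of min(β_S(b̂_S^R)/|S|, β_S(b̂_S^L)/(n-|S|))`. -/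
def alphaVal [NeZero m] (β : Finset (Fin n) → Lottery m) (p q : Fin m) : ℝ :=
  sInf {x : ℝ | ∃ S : Finset (Fin n), S.Nonempty ∧ S ≠ Finset.univ ∧
    x = min ((β S).1 (bR β q S) / (S.card : ℝ))
            ((β S).1 (bL β p S) / ((n : ℝ) - (S.card : ℝ)))}

/-- `γ_S = (|S|/n) e_{b̂_S^R} + ((n-|S|)/n) e_{b̂_S^L}`, pointwise. -/
def gammaFun [NeZero m] (β : Finset (Fin n) → Lottery m) (p q : Fin m)
    (S : Finset (Fin n)) (a : Fin m) : ℝ :=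
  ((S.card : ℝ) / (n : ℝ)) * (if a = bR β q S then 1 else 0)
  + (((n : ℝ) - (S.card : ℝ)) / (n : ℝ)) * (if a = bL β p S then 1 else 0)

/-- The max-min formula `f(P) = max_{S ⊆ N} min({r_1(P_j) : j ∈ S} ∪ {b_S})`. -/
def fbrOutcome [NeZero m] {D : Set (Pref m)} (b : Finset (Fin n) → Fin m)
    (P : Profile D n) : Fin m :=
  Finset.univ.sup' Finset.univ_nonempty
    (fun S : Finset (Fin n) =>
      (insert (b S) (S.image (fun j => topOf (P j)))).inf' (Finset.insert_nonempty _ _) id)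

/-- `f` is a `(p,q)`-fixed ballot rule with deterministic ballots `b` and constrained
dictator `i`. -/
def IsFBRWith [NeZero m] {D : Set (Pref m)} (p q : Fin m) (f : Profile D n → Fin m)
    (b : Finset (Fin n) → Fin m) (i : Fin n) : Prop :=
  b Finset.univ = lastAlt m ∧ b ∅ = 0 ∧
  (∀ S T : Finset (Fin n), S ⊂ T → b S ≤ b T) ∧
  (∀ S : Finset (Fin n), (i ∈ S → q ≤ b S) ∧ (i ∉ S → b S ≤ p)) ∧
  ∀ P : Profile D n, f P = fbrOutcome b P

end PFBRPaper

open PFBRPaper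

/-!
Sufficiency. The constrained random dictator condition makes every ballot a mixture over dictators
`d`, drawn with probabilities `ε d`, of the ballot of `S` conditioned on `[a_q, a_m]` if `d ∈ S` and
on `[a_1, a_p]` otherwise. Anonymity forces `ε d = 1 / n`, and then per-capita monotonicity says
exactly that these conditional ballots increase with `S`. Reading all of them off at a common
quantile level yields monotone deterministic ballots with dictator `d`, hence a strategy-proof fixed
ballot rule, and averaging over the level and over `d` recovers the given rule.

Necessity. Call a coalition winning for a component of the decomposition if it can force the outcome
into `[a_q, a_m]`. Two different singletons cannot both be winning, because of the freedom that
hybrid preferences have between `a_p` and `a_q`, while on average the number of winning singletons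
inside `S` is the probability that `S` wins. So these numbers agree and each component has a
dictator, without whom no coalition reaches a given `a_t` in `[a_q, a_m]`. Hence if `T` reaches
`a_t`, at most `|T| - 1` of the coalitions `T \ {j}` do, and taking averages gives per-capita
monotonicity.
-/

namespace PFBRPaper

section Order

variable {α M : Type*}

lemma eq_of_forall_sum_Ici_eq [PartialOrder α] [LocallyFiniteOrderTop α] [WellFoundedGT α]
    [AddCommGroup M] {f g : α → M} (h : ∀ k, ∑ a ∈ Ici k, f a = ∑ a ∈ Ici k, g a) : f = g := by
  funext k
  induction k using WellFoundedGT.induction with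
  | ind k ih =>
    have above : ∑ a ∈ Ioi k, f a = ∑ a ∈ Ioi k, g a :=
      sum_congr rfl fun a ha => ih a (mem_Ioi.1 ha)
    have key := h k
    rw [← add_sum_Ioi_eq_sum_Ici, ← add_sum_Ioi_eq_sum_Ici, above] at key
    exact add_right_cancel key

lemma eq_of_le_iff_le_of_mem_Ioc [LinearOrder α] {p q a b : α}
    (h : ∀ k, p < k → k ≤ q → (k ≤ a ↔ k ≤ b)) (ha : p < a ∧ a < q) : a = b := by
  have hab : a ≤ b := (h a ha.1 ha.2.le).1 le_rfl
  have hbq : p < min b q := lt_min (ha.1.trans_le hab) (ha.1.trans ha.2)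
  have hba : min b q ≤ a := (h _ hbq (min_le_right _ _)).2 (min_le_left _ _)
  exact hab.antisymm ((min_le_iff.1 hba).resolve_right ha.2.not_ge)

end Order

section Mixture

variable {κ Y R : Type*} [Fintype κ] [NonAssocSemiring R]

lemma sum_sum_mul_indicator [DecidableEq Y] (w : κ → R) (x : κ → Y) (B : Finset Y) :
    ∑ a ∈ B, ∑ k, w k * (if x k = a then 1 else 0) = ∑ k, w k * (if x k ∈ B then 1 else 0) := by
  rw [sum_comm]
  simp only [← mul_sum, sum_ite_eq]

end Mixture

section Pref

variable {m : ℕ}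

lemma exists_pref_of_key (κ : Fin m → ℕ) :
    ∃ P : Pref m, ∀ a b, κ a < κ b → Prefers P a b := by
  refine ⟨Tuple.sort κ, fun a b hab => ?_⟩
  by_contra h
  have hba := Tuple.monotone_sort κ (not_lt.1 h)
  simp only [Function.comp_apply, Equiv.apply_symm_apply] at hba
  exact hba.not_gt hab

lemma Prefers.asymm {P : Pref m} {a b : Fin m} (h : Prefers P a b) : ¬Prefers P b a :=
  lt_asymm h

lemma Prefers.trans {P : Pref m} {a b c : Fin m} (hab : Prefers P a b) (hbc : Prefers P b c) :
    Prefers P a c :=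
  lt_trans hab hbc

lemma prefers_apply_zero [NeZero m] (P : Pref m) {a : Fin m} (ha : a ≠ P 0) :
    Prefers P (P 0) a := by
  rw [Prefers, Equiv.symm_apply_apply]
  exact Fin.pos_iff_ne_zero.2 fun h => ha (P.symm_apply_eq.1 h)

lemma prefers_refl_iff {a b : Fin m} : Prefers (Equiv.refl (Fin m)) a b ↔ a < b := Iff.rfl

lemma prefers_revPref_iff {a b : Fin m} : Prefers (revPref m) a b ↔ b < a := Fin.rev_lt_rev

lemma revPref_zero [NeZero m] : revPref m 0 = lastAlt m := by
  simp [revPref, lastAlt, Fin.ext_iff, Fin.val_rev]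

lemma le_lastAlt [NeZero m] (a : Fin m) : a ≤ lastAlt m := by
  simp only [lastAlt, Fin.le_def]
  lia

end Pref

section Lottery

variable {m : ℕ}

namespace Lottery

lemma prob_nonneg (lam : Lottery m) (B : Finset (Fin m)) : 0 ≤ lam.prob B :=
  sum_nonneg fun a _ => lam.2.1 a

lemma prob_mono (lam : Lottery m) {B C : Finset (Fin m)} (h : B ⊆ C) : lam.prob B ≤ lam.prob C :=
  sum_le_sum_of_subset_of_nonneg h fun a _ _ => lam.2.1 a

lemma prob_univ (lam : Lottery m) : lam.prob univ = 1 := lam.2.2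

lemma prob_le_one (lam : Lottery m) (B : Finset (Fin m)) : lam.prob B ≤ 1 :=
  lam.prob_univ ▸ lam.prob_mono (subset_univ B)

lemma prob_compl (lam : Lottery m) (B : Finset (Fin m)) : lam.prob Bᶜ = 1 - lam.prob B := by
  rw [eq_sub_iff_add_eq', ← lam.prob_univ]
  exact sum_add_sum_compl B _

lemma prob_empty (lam : Lottery m) : lam.prob ∅ = 0 := sum_empty

lemma prob_union (lam : Lottery m) {A B : Finset (Fin m)} (h : Disjoint A B) :
    lam.prob (A ∪ B) = lam.prob A + lam.prob B := sum_union h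

lemma prob_inter_add_prob_inter {lam : Lottery m} {A B : Finset (Fin m)} (hAB : Disjoint A B)
    (h : lam.prob A + lam.prob B = 1) (C : Finset (Fin m)) :
    lam.prob (A ∩ C) + lam.prob (B ∩ C) = lam.prob C := by
  have hunion : lam.prob (A ∪ B) = 1 := (lam.prob_union hAB).trans h
  have hnull : lam.prob (C \ (A ∪ B)) = 0 := by
    refine le_antisymm ((lam.prob_mono (sdiff_eq_inter_compl C _ ▸ inter_subset_right)).trans_eq ?_)
      (lam.prob_nonneg _)
    rw [prob_compl, hunion, sub_self]
  rw [← lam.prob_union (hAB.mono inter_subset_left inter_subset_left), ← union_inter_distrib_right,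
    inter_comm, ← add_zero (lam.prob _), ← hnull]
  exact sum_inter_add_sum_sdiff C _ _

end Lottery

lemma mem_upSet {k a : Fin m} : a ∈ upSet k ↔ k ≤ a := by simp [upSet]

lemma mem_downSet {k a : Fin m} : a ∈ downSet k ↔ a ≤ k := by simp [downSet]

lemma upSet_eq_Ici (k : Fin m) : upSet k = Ici k := by ext; simp [mem_upSet]

lemma upSet_zero [NeZero m] : upSet (0 : Fin m) = univ := by ext; simp [mem_upSet]

lemma upSet_anti {k l : Fin m} (h : k ≤ l) : upSet l ⊆ upSet k := fun _ ha =>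
  mem_upSet.2 (h.trans (mem_upSet.1 ha))

lemma downSet_mono {k l : Fin m} (h : k ≤ l) : downSet k ⊆ downSet l := fun _ ha =>
  mem_downSet.2 ((mem_downSet.1 ha).trans h)

lemma disjoint_upSet_downSet {k l : Fin m} (h : k < l) : Disjoint (upSet l) (downSet k) :=
  disjoint_left.2 fun _ hl hk => h.not_ge ((mem_upSet.1 hl).trans (mem_downSet.1 hk))

lemma exists_compl_upSet_eq_downSet [NeZero m] {k : Fin m} (hk : k ≠ 0) :
    ∃ s < k, (upSet k)ᶜ = downSet s := by
  have hk0 : (k : ℕ) ≠ 0 := Fin.val_ne_zero_iff.2 hk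
  refine ⟨⟨k - 1, by lia⟩, Fin.lt_def.2 (Nat.sub_one_lt hk0), ?_⟩
  ext a
  simp only [mem_compl, mem_upSet, mem_downSet, Fin.le_def]
  lia

lemma prob_degLottery (a : Fin m) (B : Finset (Fin m)) :
    (degLottery a).prob B = if a ∈ B then 1 else 0 := by
  simp [Lottery.prob, degLottery]

lemma degLottery_injective : Function.Injective (degLottery : Fin m → Lottery m) := fun a b h => by
  have hab := prob_degLottery b {a}
  rw [← h, prob_degLottery] at hab
  by_contra hne
  simp [Ne.symm hne] at hab

lemma Lottery.ext_of_prob_upSet {lam mu : Lottery m}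
    (h : ∀ k, lam.prob (upSet k) = mu.prob (upSet k)) : lam = mu :=
  Subtype.ext <| eq_of_forall_sum_Ici_eq fun k => upSet_eq_Ici k ▸ h k

end Lottery

section Conditioning

variable {m : ℕ}

namespace Lottery

/-- The conditional lottery given `B`, with the convention that conditioning on an event of
probability zero changes nothing. -/
def cond (lam : Lottery m) (B : Finset (Fin m)) : Lottery m :=
  ⟨fun a => if lam.prob B = 0 then lam.1 a else if a ∈ B then lam.1 a / lam.prob B else 0,
    fun a => by
      dsimp only
      split_ifs
      exacts [lam.2.1 a, div_nonneg (lam.2.1 a) (lam.prob_nonneg B), le_rfl],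
    by
      split_ifs with h
      · exact lam.2.2
      · rw [sum_ite_mem, univ_inter, ← sum_div]
        exact div_self h⟩

lemma prob_cond {lam : Lottery m} {B : Finset (Fin m)} (h : lam.prob B ≠ 0) (C : Finset (Fin m)) :
    (lam.cond B).prob C = lam.prob (B ∩ C) / lam.prob B := by
  calc (lam.cond B).prob C
      = ∑ a ∈ C, if a ∈ B then lam.1 a / lam.prob B else 0 := sum_congr rfl fun _ _ => if_neg h
    _ = lam.prob (B ∩ C) / lam.prob B := by rw [sum_ite_mem, ← sum_div, inter_comm]; rfl

lemma prob_mul_prob_cond (lam : Lottery m) (B C : Finset (Fin m)) :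
    lam.prob B * (lam.cond B).prob C = lam.prob (B ∩ C) := by
  by_cases h : lam.prob B = 0
  · rw [h, zero_mul]
    exact le_antisymm (lam.prob_nonneg _) (h ▸ lam.prob_mono inter_subset_left)
  · rw [prob_cond h, mul_div_cancel₀ _ h]

lemma cond_degLottery {a : Fin m} {B : Finset (Fin m)} (ha : a ∈ B) :
    (degLottery a).cond B = degLottery a := by
  have h : (degLottery a).prob B = 1 := by rw [prob_degLottery, if_pos ha]
  refine ext_of_prob_upSet fun k => ?_
  rw [prob_cond (h ▸ one_ne_zero), h, div_one, prob_degLottery, prob_degLottery]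
  simp only [mem_inter, ha, true_and]

end Lottery

end Conditioning

section Coupling

open MeasureTheory

variable {m : ℕ} [NeZero m]

namespace Lottery

/-- The upper quantile function: the largest `a` such that `[a, a_m]` has probability exceeding `u`
(and `a_1` for `u ≥ 1`). -/
def quantile (lam : Lottery m) (u : ℝ) : Fin m :=
  (univ.filter fun k => u < lam.prob (upSet k)).sup id

lemma le_quantile_iff {lam : Lottery m} {u : ℝ} (hu : u < 1) {k : Fin m} :
    k ≤ lam.quantile u ↔ u < lam.prob (upSet k) := by
  rcases eq_or_ne k 0 with rfl | hk
  · simp [upSet_zero, prob_univ, hu]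
  rw [quantile, Finset.le_sup_iff (bot_lt_iff_ne_bot.2 hk)]
  simp only [mem_filter, mem_univ, true_and, id]
  exact ⟨fun ⟨l, hl, hkl⟩ => hl.trans_le (lam.prob_mono (upSet_anti hkl)), fun h => ⟨k, h, le_rfl⟩⟩

lemma quantile_antitone (lam : Lottery m) : Antitone lam.quantile := fun _ _ huv =>
  sup_mono <| monotone_filter_right _ fun _ _ h => huv.trans_lt h

lemma quantile_mono {lam mu : Lottery m} (h : ∀ k, lam.prob (upSet k) ≤ mu.prob (upSet k)) (u : ℝ) :
    lam.quantile u ≤ mu.quantile u :=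
  sup_mono <| monotone_filter_right _ fun k _ hk => hk.trans_le (h k)

lemma quantile_degLottery {u : ℝ} (hu : u ∈ Set.Ico (0 : ℝ) 1) (a : Fin m) :
    (degLottery a).quantile u = a := by
  refine eq_of_forall_le_iff fun k => ?_
  rw [le_quantile_iff hu.2, prob_degLottery]
  by_cases h : k ≤ a <;> simp [mem_upSet, h, hu.1, hu.2]

/-- Evaluating all quantile functions at one common uniform threshold couples the lotteries, and
the coupling assigns positive weight only to tuples of simultaneous quantiles. -/
lemma exists_quantile_coupling {ι : Type*} [Fintype ι] [DecidableEq ι] (γ : ι → Lottery m) :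
    ∃ w : (ι → Fin m) → ℝ, (∀ b, 0 ≤ w b) ∧
      (∀ b, 0 < w b → ∃ u ∈ Set.Ico (0 : ℝ) 1, ∀ i, b i = (γ i).quantile u) ∧
      ∀ i k, ∑ b, w b * (if k ≤ b i then 1 else 0) = (γ i).prob (upSet k) := by
  let Q : ℝ → ι → Fin m := fun u i => (γ i).quantile u
  have hQ : Measurable Q := measurable_pi_iff.2 fun i => (quantile_antitone (γ i)).measurable
  let ν : Measure (ι → Fin m) := (volume.restrict (Set.Ico 0 1)).map Q
  have hν (s : Set (ι → Fin m)) : ν.real s = volume.real (Q ⁻¹' s ∩ Set.Ico 0 1) := by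
    have hs := s.toFinite.measurableSet
    rw [map_measureReal_apply hQ hs, measureReal_restrict_apply (hQ hs)]
  refine ⟨fun b => ν.real {b}, fun b => measureReal_nonneg, fun b hb => ?_, fun i k => ?_⟩
  · by_contra! hno
    have hempty : Q ⁻¹' {b} ∩ Set.Ico 0 1 = ∅ :=
      Set.eq_empty_of_forall_notMem fun u ⟨hub, hu⟩ =>
        let ⟨i, hi⟩ := hno u hu
        hi (congrFun hub i).symm
    exact hb.ne' ((hν {b}).trans (by rw [hempty, measureReal_empty]))
  · have hp := (γ i).prob_le_one (upSet k)
    have hpre : Q ⁻¹' (univ.filter fun b => k ≤ b i : Finset (ι → Fin m)) ∩ Set.Ico 0 1 =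
        Set.Ico 0 ((γ i).prob (upSet k)) := by
      ext u
      simp only [coe_filter, mem_univ, true_and, Set.preimage_ofPred_eq, Set.mem_inter_iff,
        Set.mem_ofPred_eq, Set.mem_Ico, Q]
      constructor
      · exact fun ⟨hk, h0, h1⟩ => ⟨h0, (le_quantile_iff h1).1 hk⟩
      · exact fun ⟨h0, hk⟩ => ⟨(le_quantile_iff (hk.trans_le hp)).2 hk, h0, hk.trans_le hp⟩
    simp only [mul_ite, mul_one, mul_zero]
    rw [← sum_filter, sum_measureReal_singleton, hν, hpre,
      Real.volume_real_Ico_of_le (prob_nonneg _ _), sub_zero]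

end Lottery

end Coupling

section StrategyProofness

variable {m n : ℕ} {D : Set (Pref m)} {f : Profile D n → Fin m}

lemma topSum_degLottery (a : Fin m) (P : Pref m) (k : ℕ) :
    topSum (degLottery a) P k = if (P.symm a : ℕ) < k then 1 else 0 := by
  simp only [topSum, degLottery, ← Equiv.eq_symm_apply, sum_ite_eq', mem_filter, mem_univ,
    true_and]

lemma strategyProof_degLottery_iff :
    StrategyProof (fun P => degLottery (f P)) ↔
      ∀ i P (Q : D), ¬Prefers (P i).1 (f (Function.update P i Q)) (f P) := by
  simp only [StrategyProof, Prefers, not_lt, topSum_degLottery]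
  constructor
  · intro h i P Q
    have hle := h i P Q _ ((P i).1.symm (f (Function.update P i Q))).is_lt
    by_contra! hlt
    rw [if_pos (Nat.lt_succ_self _), if_neg (by simpa using hlt)] at hle
    linarith
  · intro h i P Q k _
    split_ifs with hdev htruth
    · rfl
    · exact absurd (lt_of_le_of_lt (Fin.le_def.1 (h i P Q)) hdev) htruth
    · exact zero_le_one
    · rfl

end StrategyProofness

section PFBR

variable {m n : ℕ} {D : Set (Pref m)} {φ : Profile D n → Lottery m}
  {β : Finset (Fin n) → Lottery m} {p q : Fin m}

/-- The profile in which the voters of `S` rank `a_m` first, ..., `a_1` last and the others rank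
`a_1` first, ..., `a_m` last; a PFBR evaluated at it returns the ballot of `S`. -/
def ballotProfile (h : Diversity D) (S : Finset (Fin n)) : Profile D n :=
  S.piecewise (fun _ => ⟨revPref m, h.2⟩) (fun _ => ⟨Equiv.refl _, h.1⟩)

section BallotProfile

variable (hD : Diversity D)
include hD

lemma ballotProfile_apply_of_mem {S : Finset (Fin n)} {i : Fin n} (hi : i ∈ S) :
    ballotProfile hD S i = ⟨revPref m, hD.2⟩ := piecewise_eq_of_mem _ _ _ hi

lemma ballotProfile_apply_of_notMem {S : Finset (Fin n)} {i : Fin n} (hi : i ∉ S) :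
    ballotProfile hD S i = ⟨Equiv.refl _, hD.1⟩ := piecewise_eq_of_notMem _ _ _ hi

lemma ballotProfile_insert (S : Finset (Fin n)) (i : Fin n) :
    ballotProfile hD (insert i S) =
      Function.update (ballotProfile hD S) i ⟨revPref m, hD.2⟩ := by
  simp only [ballotProfile, piecewise_insert]

end BallotProfile

variable [NeZero m]

lemma mem_voterSet {P : Profile D n} {k : Fin m} {i : Fin n} :
    i ∈ voterSet P k ↔ k ≤ topOf (P i) := by
  rw [voterSet, mem_filter, and_iff_right (mem_univ i)]

lemma IsPFBRWith.prob_upSet (h : IsPFBRWith φ β) (P : Profile D n) (k : Fin m) :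
    (φ P).prob (upSet k) = (β (voterSet P k)).prob (upSet k) := by
  calc (φ P).prob (upSet k)
      = ∑ a ∈ Ici k, (tailProb β P a - tailProb β P (a + 1)) := by
        rw [upSet_eq_Ici]
        exact sum_congr rfl fun a _ => h.2.2 P a
    _ = ∑ a ∈ Ico (k : ℕ) m, (tailProb β P a - tailProb β P (a + 1)) := by
        rw [← Fin.map_valEmbedding_Ici, sum_map]
        rfl
    _ = tailProb β P k - tailProb β P m := by
        simpa only [neg_sub_neg] using sum_Ico_sub (fun a => -tailProb β P a) k.is_le'
    _ = (β (voterSet P k)).prob (upSet k) := by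
        rw [tailProb, tailProb, dif_pos k.is_lt, dif_neg (lt_irrefl m), sub_zero]

variable (hD : Diversity D)
include hD

lemma voterSet_ballotProfile (S : Finset (Fin n)) {k : Fin m} (hk : k ≠ 0) :
    voterSet (ballotProfile hD S) k = S := by
  ext i
  rw [mem_voterSet, topOf]
  by_cases hi : i ∈ S
  · simp [ballotProfile_apply_of_mem hD hi, revPref_zero, le_lastAlt, hi]
  · simp [ballotProfile_apply_of_notMem hD hi, hk, hi]

lemma IsPFBRWith.apply_ballotProfile (h : IsPFBRWith φ β) (S : Finset (Fin n)) :
    φ (ballotProfile hD S) = β S := by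
  refine Lottery.ext_of_prob_upSet fun k => ?_
  rcases eq_or_ne k 0 with rfl | hk
  · simp only [upSet_zero, Lottery.prob_univ]
  · rw [h.prob_upSet, voterSet_ballotProfile hD S hk]

lemma IsPFBRWith.ballot_eq_of_card_eq (h : IsPFBRWith φ β) (hanon : Anonymous φ)
    {S T : Finset (Fin n)} (hST : #S = #T) : β S = β T := by
  let σ : Equiv.Perm (Fin n) := (equivOfCardEq hST).extendSubtype
  have hσ : ballotProfile hD T ∘ σ = ballotProfile hD S := by
    funext i
    by_cases hi : i ∈ S
    · rw [Function.comp_apply, ballotProfile_apply_of_mem hD hi,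
        ballotProfile_apply_of_mem hD (Equiv.extendSubtype_mem _ i hi)]
    · rw [Function.comp_apply, ballotProfile_apply_of_notMem hD hi,
        ballotProfile_apply_of_notMem hD (Equiv.extendSubtype_not_mem _ i hi)]
  rw [← h.apply_ballotProfile hD S, ← h.apply_ballotProfile hD T, ← hσ, hanon]

end PFBR

section ConstrainedRandomDictatorship

variable {m n : ℕ} {β : Finset (Fin n) → Lottery m} {p q : Fin m}

lemma ConstrainedRD.uniform (hcrd : ConstrainedRD p q β)
    (hcard : ∀ S T : Finset (Fin n), #S = #T → β S = β T) :
    ConstrainedRDUniform p q β := by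
  obtain ⟨ε, -, hsum, hε⟩ := hcrd
  have hconst (i j : Fin n) : ε i = ε j := by
    rw [← sum_singleton ε i, ← sum_singleton ε j, ← (hε {i}).1, ← (hε {j}).1,
      hcard {i} {j} (by rw [card_singleton, card_singleton])]
  have hval (i : Fin n) : ε i = 1 / n := by
    have hn : (n : ℝ) ≠ 0 := Nat.cast_ne_zero.2 i.pos.ne'
    rw [eq_div_iff hn, ← hsum, sum_congr rfl fun j _ => hconst j i, sum_const, card_univ,
      Fintype.card_fin, nsmul_eq_mul, mul_comm]
  intro S
  simp only [(hε S).1, (hε S).2, hval, sum_const, nsmul_eq_mul, mul_one_div, and_self]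

end ConstrainedRandomDictatorship

section FixedBallotRules

variable {m n : ℕ} [NeZero m] {D : Set (Pref m)} {p q : Fin m} {b : Finset (Fin n) → Fin m}
  {f : Profile D n → Fin m} {d : Fin n}

lemma le_fbrOutcome_iff (hb : Monotone b) {P : Profile D n} {k : Fin m} :
    k ≤ fbrOutcome b P ↔ k ≤ b (voterSet P k) := by
  simp only [fbrOutcome, le_sup'_iff, le_inf'_iff, mem_univ, true_and, mem_insert, mem_image,
    forall_eq_or_imp, forall_exists_index, and_imp, forall_apply_eq_imp_iff₂, id]
  constructor
  · exact fun ⟨S, hS, htop⟩ => hS.trans (hb fun i hi => mem_voterSet.2 (htop i hi))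
  · exact fun h => ⟨voterSet P k, h, fun i hi => mem_voterSet.1 hi⟩

lemma IsFBRWith.le_iff (h : IsFBRWith p q f b d) {P : Profile D n} {k : Fin m} :
    k ≤ f P ↔ k ≤ b (voterSet P k) := by
  rw [h.2.2.2.2, le_fbrOutcome_iff (monotone_iff_forall_lt.2 fun {S T} => h.2.2.1 S T)]

lemma IsFBRWith.eq_of_topOf_eq (h : IsFBRWith p q f b d) {P : Profile D n} {a : Fin m}
    (ha : ∀ i, topOf (P i) = a) : f P = a := by
  refine eq_of_forall_le_iff fun k => ?_
  rw [h.le_iff]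
  by_cases hk : k ≤ a
  · rw [show voterSet P k = univ by ext; simp [mem_voterSet, ha, hk], h.1]
    exact iff_of_true (le_lastAlt k) hk
  · rw [show voterSet P k = ∅ by ext; simp [mem_voterSet, ha, hk], h.2.1]
    exact iff_of_false (fun h0 => hk (h0.trans (Fin.zero_le a))) hk

lemma IsFBRWith.uncompromising (h : IsFBRWith p q f b d) (P : Profile D n) (i : Fin n) (Q : D) :
    f P = topOf (P i) ∨ (topOf (P i) < f P ∧ f P ≤ f (Function.update P i Q)) ∨
      (f P < topOf (P i) ∧ f (Function.update P i Q) ≤ f P) := by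
  have hb : Monotone b := monotone_iff_forall_lt.2 fun {S T} => h.2.2.1 S T
  rcases lt_trichotomy (f P) (topOf (P i)) with hlt | heq | hgt
  · refine .inr <| .inr ⟨hlt, ?_⟩
    by_contra! hincr
    let k := min (f (Function.update P i Q)) (topOf (P i))
    have hsub : voterSet (Function.update P i Q) k ⊆ voterSet P k := fun j hj => by
      rcases eq_or_ne j i with rfl | hji
      · exact mem_voterSet.2 (min_le_right _ _)
      · simpa only [mem_voterSet, Function.update_of_ne hji] using hj
    exact (lt_min hincr hlt).not_ge
      (h.le_iff.2 ((h.le_iff.1 (min_le_left _ _)).trans (hb hsub)))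
  · exact .inl heq
  · refine .inr <| .inl ⟨hgt, h.le_iff.2 ((h.le_iff.1 le_rfl).trans (hb fun j hj => ?_))⟩
    have hji : j ≠ i := by
      rintro rfl
      exact hgt.not_ge (mem_voterSet.1 hj)
    simpa only [mem_voterSet, Function.update_of_ne hji] using hj

lemma IsFBRWith.le_iff_le_topOf_dictator (h : IsFBRWith p q f b d) (P : Profile D n) {k : Fin m}
    (hpk : p < k) (hkq : k ≤ q) : k ≤ f P ↔ k ≤ topOf (P d) := by
  rw [h.le_iff, ← mem_voterSet]
  by_cases hd : d ∈ voterSet P k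
  · exact iff_of_true (hkq.trans ((h.2.2.2.1 _).1 hd)) hd
  · exact iff_of_false (fun hk => hpk.not_ge (hk.trans ((h.2.2.2.1 _).2 hd))) hd

lemma IsFBRWith.apply_update_of_mem_Ioo (h : IsFBRWith p q f b d) {P : Profile D n} {i : Fin n}
    (hf : p < f P ∧ f P < q) (hi : f P ≠ topOf (P i)) (Q : D) :
    f (Function.update P i Q) = f P := by
  have hid : d ≠ i := by
    rintro rfl
    exact hi (eq_of_le_iff_le_of_mem_Ioc (fun k => h.le_iff_le_topOf_dictator P) hf)
  refine (eq_of_le_iff_le_of_mem_Ioc (fun k hpk hkq => ?_) hf).symm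
  rw [h.le_iff_le_topOf_dictator _ hpk hkq, h.le_iff_le_topOf_dictator _ hpk hkq,
    Function.update_of_ne hid]

lemma IsHybridPref.prefers_of_lt {P : Pref m} (h : IsHybridPref p q P) (hpq : p < q)
    {a c : Fin m} (ha : a ≤ p ∨ q ≤ a) (hPa : P 0 < a) (hac : a < c) : Prefers P a c := by
  obtain ⟨hsp, hp, -⟩ := h
  rcases ha with hap | hqa
  swap
  · exact hsp c a (.inr ⟨hqa.trans hac.le, hqa⟩) (.inr ⟨hPa, hac⟩)
  have hPp : P 0 < p := hPa.trans_le hap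
  rcases le_or_gt c p with hcp | hpc
  · exact hsp c a (.inl ⟨hcp, hap⟩) (.inr ⟨hPa, hac⟩)
  have hp_c : Prefers P p c := by
    rcases le_or_gt c q with hcq | hqc
    · exact hp hPp.le c hpc.le hcq hpc.ne'
    · exact (hp hPp.le q hpq.le le_rfl hpq.ne').trans
        (hsp c q (.inr ⟨hqc.le, le_rfl⟩) (.inr ⟨hPp.trans hpq, hqc⟩))
  rcases hap.eq_or_lt with rfl | hap
  · exact hp_c
  · exact (hsp p a (.inl ⟨le_rfl, hap.le⟩) (.inr ⟨hPa, hap⟩)).trans hp_c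

lemma IsHybridPref.prefers_of_gt {P : Pref m} (h : IsHybridPref p q P) (hpq : p < q)
    {a c : Fin m} (ha : a ≤ p ∨ q ≤ a) (hPa : a < P 0) (hac : c < a) : Prefers P a c := by
  obtain ⟨hsp, -, hq⟩ := h
  rcases ha with hap | hqa
  · exact hsp c a (.inl ⟨hac.le.trans hap, hap⟩) (.inl ⟨hac, hPa⟩)
  have hqP : q < P 0 := hqa.trans_lt hPa
  rcases le_or_gt q c with hqc | hcq
  · exact hsp c a (.inr ⟨hqc, hqa⟩) (.inl ⟨hac, hPa⟩)
  have hq_c : Prefers P q c := by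
    rcases le_or_gt p c with hpc | hcp
    · exact hq hqP.le c hpc hcq.le hcq.ne
    · exact (hq hqP.le p le_rfl hpq.le hpq.ne).trans
        (hsp c p (.inl ⟨hcp.le, le_rfl⟩) (.inl ⟨hcp, hpq.trans hqP⟩))
  rcases hqa.eq_or_lt with rfl | hqa
  · exact hq_c
  · exact (hsp q a (.inr ⟨le_rfl, hqa.le⟩) (.inl ⟨hqa, hPa⟩)).trans hq_c

lemma IsFBRWith.unanimous (h : IsFBRWith p q f b d) : Unanimous (fun P => degLottery (f P)) :=
  fun _ _ ha => congrArg degLottery (h.eq_of_topOf_eq ha)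

lemma IsFBRWith.strategyProof (h : IsFBRWith p q f b d) (hpq : p < q)
    (hD : D ⊆ hybridDomain p q) : StrategyProof (fun P => degLottery (f P)) := by
  refine strategyProof_degLottery_iff.2 fun i P Q hpref => ?_
  have hhyb : IsHybridPref p q (P i).1 := hD (P i).2
  have hne : f (Function.update P i Q) ≠ f P := fun heq => lt_irrefl _ (heq ▸ hpref)
  have hout (hi : f P ≠ topOf (P i)) : f P ≤ p ∨ q ≤ f P := by
    by_contra! hin
    exact hne (h.apply_update_of_mem_Ioo hin hi Q)
  rcases h.uncompromising P i Q with htop | ⟨hlt, hle⟩ | ⟨hlt, hle⟩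
  · have htop' : f P = (P i).1 0 := htop
    exact hpref.asymm (htop' ▸ prefers_apply_zero _ (htop' ▸ hne))
  · exact hpref.asymm (hhyb.prefers_of_lt hpq (hout hlt.ne') hlt (hle.lt_of_ne hne.symm))
  · exact hpref.asymm (hhyb.prefers_of_gt hpq (hout hlt.ne) hlt (hle.lt_of_ne hne))

end FixedBallotRules

section ConditionalMonotonicity

variable {m n : ℕ} {β : Finset (Fin n) → Lottery m} {p q : Fin m}

/-- Conditionally on `[a_q, a_m]` the ballots increase with the coalition, and conditionally on
`[a_1, a_p]` too, in the order of first-order stochastic dominance; denominators are cleared because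
the conditioning events may have probability zero. For uniform dictatorial coefficients this is
per-capita monotonicity. -/
def ConditionallyMonotone (p q : Fin m) (β : Finset (Fin n) → Lottery m) : Prop :=
  ∀ S T : Finset (Fin n), S ⊆ T →
    (∀ t, q ≤ t → (β S).prob (upSet t) * (β T).prob (upSet q) ≤
      (β T).prob (upSet t) * (β S).prob (upSet q)) ∧
    (∀ s, s ≤ p → (β T).prob (downSet s) * (β S).prob (downSet p) ≤
      (β S).prob (downSet s) * (β T).prob (downSet p))

lemma mul_le_mul_of_div_card_le {x X : Finset (Fin n) → ℝ} (hx : ∀ S, 0 ≤ x S)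
    (hxX : ∀ S, x S ≤ X S) (hX : ∀ S, X S = (#S : ℝ) / n) (huniv : x univ = X univ)
    (hpc : ∀ S T : Finset (Fin n), S.Nonempty → S ⊂ T → T ⊂ univ → x S / #S ≤ x T / #T)
    {S T : Finset (Fin n)} (hST : S ⊆ T) : x S * X T ≤ x T * X S := by
  obtain rfl | hlt := hST.eq_or_ssubset
  · exact le_rfl
  obtain rfl | hS := S.eq_empty_or_nonempty
  · have hX0 : X ∅ = 0 := by rw [hX, card_empty, Nat.cast_zero, zero_div]
    rw [hX0, mul_zero, (hx ∅).antisymm' (hX0 ▸ hxX ∅), zero_mul]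
  obtain rfl | hT := T.subset_univ.eq_or_ssubset
  · rw [huniv, mul_comm]
    gcongr
    exacts [huniv ▸ hx univ, hxX S]
  have hcardS : (0 : ℝ) < #S := Nat.cast_pos.2 hS.card_pos
  have hcardT : (0 : ℝ) < #T := Nat.cast_pos.2 (hS.mono hST).card_pos
  have hdiv := (div_le_div_iff₀ hcardS hcardT).1 (hpc S T hS hlt hT)
  rw [hX, hX, ← mul_div_assoc, ← mul_div_assoc]
  gcongr

lemma PerCapitaMonotone.conditionallyMonotone [NeZero m] (hpc : PerCapitaMonotone p q β)
    (hβ : BallotUnanimity β) (hunif : ConstrainedRDUniform p q β) :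
    ConditionallyMonotone p q β := by
  have hcompl {S : Finset (Fin n)} : (β Sᶜ).prob (downSet p) = (#S : ℝ) / n := by
    rw [(hunif Sᶜ).2, compl_compl]
  refine fun S T hST => ⟨fun t ht => ?_, fun s hs => ?_⟩
  · refine mul_le_mul_of_div_card_le (x := fun S => (β S).prob (upSet t))
      (X := fun S => (β S).prob (upSet q)) (fun S => Lottery.prob_nonneg _ _)
      (fun S => Lottery.prob_mono _ (upSet_anti ht)) (fun S => (hunif S).1) ?_
      (fun S T hS hST hT => (hpc S T hS hST hT).1 t ht) hST
    simp [hβ.1, prob_degLottery, mem_upSet, le_lastAlt]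
  · have key := mul_le_mul_of_div_card_le (x := fun S => (β Sᶜ).prob (downSet s))
      (X := fun S => (β Sᶜ).prob (downSet p)) (fun S => Lottery.prob_nonneg _ _)
      (fun S => Lottery.prob_mono _ (downSet_mono hs)) (fun S => hcompl)
      (by simp [hβ.2, prob_degLottery, mem_downSet])
      (fun S T hS hST hT => (hpc S T hS hST hT).2 s hs) (compl_subset_compl.2 hST)
    simpa only [compl_compl] using key

end ConditionalMonotonicity

section ConditionalBallots

variable {m n : ℕ} {β : Finset (Fin n) → Lottery m} {p q : Fin m} {ε : Fin n → ℝ} {d : Fin n}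

/-- The ballot of `S` conditioned on the side of the alternatives on which the dictator `d` lies:
`[a_q, a_m]` if `d ∈ S` and `[a_1, a_p]` otherwise. -/
def conditionalBallot (p q : Fin m) (β : Finset (Fin n) → Lottery m) (d : Fin n)
    (S : Finset (Fin n)) : Lottery m :=
  (β S).cond (if d ∈ S then upSet q else downSet p)

lemma conditionalBallot_univ [NeZero m] (hβ : BallotUnanimity β) :
    conditionalBallot p q β d univ = degLottery (lastAlt m) := by
  rw [conditionalBallot, if_pos (mem_univ d), hβ.1,
    Lottery.cond_degLottery (mem_upSet.2 (le_lastAlt q))]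

lemma conditionalBallot_empty [NeZero m] (hβ : BallotUnanimity β) :
    conditionalBallot p q β d ∅ = degLottery 0 := by
  rw [conditionalBallot, if_neg (notMem_empty d), hβ.2,
    Lottery.cond_degLottery (mem_downSet.2 (Fin.zero_le p))]

section DictatorialCoefficients

variable (hnonneg : ∀ i, 0 ≤ ε i)
  (hε : ∀ S : Finset (Fin n), (β S).prob (upSet q) = ∑ i ∈ S, ε i ∧
    (β S).prob (downSet p) = ∑ i ∈ Sᶜ, ε i)
include hε

lemma sum_mul_prob_conditionalBallot (hsum : ∑ i, ε i = 1) (hpq : p < q) (S : Finset (Fin n))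
    (C : Finset (Fin m)) : ∑ d, ε d * (conditionalBallot p q β d S).prob C = (β S).prob C := by
  have htotal : (β S).prob (upSet q) + (β S).prob (downSet p) = 1 := by
    rw [(hε S).1, (hε S).2, sum_add_sum_compl, hsum]
  have hR : ∑ d ∈ S, ε d * (conditionalBallot p q β d S).prob C = (β S).prob (upSet q ∩ C) := by
    rw [← Lottery.prob_mul_prob_cond, (hε S).1, sum_mul]
    exact sum_congr rfl fun d hd => by rw [conditionalBallot, if_pos hd]
  have hL : ∑ d ∈ Sᶜ, ε d * (conditionalBallot p q β d S).prob C =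
      (β S).prob (downSet p ∩ C) := by
    rw [← Lottery.prob_mul_prob_cond, (hε S).2, sum_mul]
    exact sum_congr rfl fun d hd => by rw [conditionalBallot, if_neg (mem_compl.1 hd)]
  rw [← sum_add_sum_compl S, hR, hL,
    Lottery.prob_inter_add_prob_inter (disjoint_upSet_downSet hpq) htotal]

include hnonneg

lemma prob_conditioning_event_pos (hd : 0 < ε d) (S : Finset (Fin n)) :
    0 < (β S).prob (if d ∈ S then upSet q else downSet p) := by
  split_ifs with hdS
  · rw [(hε S).1]
    exact hd.trans_le (single_le_sum (fun i _ => hnonneg i) hdS)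
  · rw [(hε S).2]
    exact hd.trans_le (single_le_sum (fun i _ => hnonneg i) (mem_compl.2 hdS))

lemma prob_conditionalBallot (hd : 0 < ε d) (S : Finset (Fin n)) (C : Finset (Fin m)) :
    (conditionalBallot p q β d S).prob C =
      (β S).prob ((if d ∈ S then upSet q else downSet p) ∩ C) /
        (β S).prob (if d ∈ S then upSet q else downSet p) :=
  Lottery.prob_cond (prob_conditioning_event_pos hnonneg hε hd S).ne' C

lemma conditionalBallot_prob_upSet_of_mem (hd : 0 < ε d) {S : Finset (Fin n)} (hdS : d ∈ S)
    {k : Fin m} (hk : k ≤ q) : (conditionalBallot p q β d S).prob (upSet k) = 1 := by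
  have hpos := prob_conditioning_event_pos hnonneg hε hd S
  rw [prob_conditionalBallot hnonneg hε hd, if_pos hdS, inter_eq_left.2 (upSet_anti hk)]
  rw [if_pos hdS] at hpos
  exact div_self hpos.ne'

lemma conditionalBallot_prob_upSet_of_notMem (hd : 0 < ε d) {S : Finset (Fin n)} (hdS : d ∉ S)
    {k : Fin m} (hk : p < k) : (conditionalBallot p q β d S).prob (upSet k) = 0 := by
  rw [prob_conditionalBallot hnonneg hε hd, if_neg hdS, inter_comm,
    disjoint_iff_inter_eq_empty.1 (disjoint_upSet_downSet hk), Lottery.prob_empty, zero_div]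

lemma conditionalBallot_mono [NeZero m] (hcm : ConditionallyMonotone p q β) (hpq : p < q)
    (hd : 0 < ε d) {S T : Finset (Fin n)} (hST : S ⊆ T) (k : Fin m) :
    (conditionalBallot p q β d S).prob (upSet k) ≤
      (conditionalBallot p q β d T).prob (upSet k) := by
  have hposS := prob_conditioning_event_pos hnonneg hε hd S
  have hposT := prob_conditioning_event_pos hnonneg hε hd T
  by_cases hdT : d ∈ T
  · rcases le_or_gt k q with hkq | hqk
    · rw [conditionalBallot_prob_upSet_of_mem hnonneg hε hd hdT hkq]
      exact Lottery.prob_le_one _ _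
    by_cases hdS : d ∈ S
    · rw [if_pos hdS] at hposS
      rw [if_pos hdT] at hposT
      rw [prob_conditionalBallot hnonneg hε hd, prob_conditionalBallot hnonneg hε hd, if_pos hdS,
        if_pos hdT, inter_eq_right.2 (upSet_anti hqk.le), div_le_div_iff₀ hposS hposT]
      exact (hcm S T hST).1 k hqk.le
    · rw [conditionalBallot_prob_upSet_of_notMem hnonneg hε hd hdS (hpq.trans hqk)]
      exact Lottery.prob_nonneg _ _
  · have hdS : d ∉ S := fun h => hdT (hST h)
    rcases lt_or_ge p k with hpk | hkp
    · rw [conditionalBallot_prob_upSet_of_notMem hnonneg hε hd hdS hpk]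
      exact Lottery.prob_nonneg _ _
    rcases eq_or_ne k 0 with rfl | hk
    · simp only [upSet_zero, Lottery.prob_univ, le_rfl]
    obtain ⟨s, hsk, hs⟩ := exists_compl_upSet_eq_downSet hk
    rw [if_neg hdS] at hposS
    rw [if_neg hdT] at hposT
    rw [← sub_le_sub_iff_left 1, ← Lottery.prob_compl, ← Lottery.prob_compl, hs,
      prob_conditionalBallot hnonneg hε hd, prob_conditionalBallot hnonneg hε hd, if_neg hdS,
      if_neg hdT, inter_eq_right.2 (downSet_mono (hsk.le.trans hkp)),
      div_le_div_iff₀ hposT hposS]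
    exact (hcm S T hST).2 s (hsk.le.trans hkp)

end DictatorialCoefficients

end ConditionalBallots

section Sufficiency

variable {m n : ℕ} [NeZero m] {D : Set (Pref m)} {φ : Profile D n → Lottery m}
  {β : Finset (Fin n) → Lottery m} {p q : Fin m} {ε : Fin n → ℝ} {d : Fin n}

lemma decomposable_of_mixture {ι : Type*} [Fintype ι] {w : ι → ℝ} {f : ι → Profile D n → Fin m}
    (hw : ∀ i, 0 ≤ w i) (hsum : ∑ i, w i = 1)
    (hf : ∀ i, 0 < w i → Unanimous (fun P => degLottery (f i P)) ∧
      StrategyProof (fun P => degLottery (f i P)))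
    (hφ : ∀ P a, (φ P).1 a = ∑ i, w i * (if f i P = a then 1 else 0)) : Decomposable φ := by
  let e := Fintype.equivFin {i // 0 < w i}
  have hreindex (x : ι → ℝ) :
      ∑ k, w (e.symm k) * x (e.symm k) = ∑ i, w i * x i := by
    rw [e.symm.sum_comp fun i : {i // 0 < w i} => w i * x i,
      ← sum_subtype (univ.filter fun i => 0 < w i) (by simp) fun i => w i * x i]
    exact sum_filter_of_ne fun i _ hi => (hw i).lt_of_ne' (left_ne_zero_of_mul hi)
  refine ⟨_, fun k => f (e.symm k), fun k => w (e.symm k), fun k => (e.symm k).2, ?_,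
    fun k => hf _ (e.symm k).2, fun P a => ?_⟩
  · simpa only [mul_one, hsum] using hreindex fun _ => 1
  · rw [hφ, hreindex fun i => if f i P = a then 1 else 0]

lemma isFBRWith_of_eq_quantile_conditionalBallot (hβ : BallotUnanimity β)
    (hcm : ConditionallyMonotone p q β) (hpq : p < q) (hnonneg : ∀ i, 0 ≤ ε i)
    (hε : ∀ S : Finset (Fin n), (β S).prob (upSet q) = ∑ i ∈ S, ε i ∧
      (β S).prob (downSet p) = ∑ i ∈ Sᶜ, ε i)
    (hd : 0 < ε d) {b : Finset (Fin n) → Fin m} {u : ℝ} (hu : u ∈ Set.Ico (0 : ℝ) 1)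
    (hb : ∀ S, b S = (conditionalBallot p q β d S).quantile u) :
    IsFBRWith p q (fbrOutcome b : Profile D n → Fin m) b d := by
  refine ⟨?_, ?_, fun S T hST => ?_, fun S => ⟨fun hdS => ?_, fun hdS => ?_⟩, fun _ => rfl⟩
  · rw [hb, conditionalBallot_univ hβ, Lottery.quantile_degLottery hu]
  · rw [hb, conditionalBallot_empty hβ, Lottery.quantile_degLottery hu]
  · rw [hb, hb]
    exact Lottery.quantile_mono (conditionalBallot_mono hnonneg hε hcm hpq hd hST.subset) u
  · rw [hb, Lottery.le_quantile_iff hu.2,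
      conditionalBallot_prob_upSet_of_mem hnonneg hε hd hdS le_rfl]
    exact hu.2
  · by_contra! hlt
    have hpos := (Lottery.le_quantile_iff hu.2).1 (hb S).le
    rw [conditionalBallot_prob_upSet_of_notMem hnonneg hε hd hdS hlt] at hpos
    exact hpos.not_ge hu.1

theorem ConditionallyMonotone.decomposable (hcm : ConditionallyMonotone p q β)
    (hD : D ⊆ hybridDomain p q) (hpq : p < q) (hβ : IsPFBRWith φ β) (hcrd : ConstrainedRD p q β) :
    Decomposable φ := by
  obtain ⟨ε, hnonneg, hsum, hε⟩ := hcrd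
  choose w hw hquantile hmarginal using fun d =>
    Lottery.exists_quantile_coupling (conditionalBallot p q β d)
  have hfbr (i : Fin n × (Finset (Fin n) → Fin m)) (hi : 0 < ε i.1 * w i.1 i.2) :
      IsFBRWith p q (fbrOutcome i.2 : Profile D n → Fin m) i.2 i.1 := by
    have hd : 0 < ε i.1 := pos_of_mul_pos_left hi (hw _ _)
    obtain ⟨u, hu, hb⟩ := hquantile i.1 i.2 (pos_of_mul_pos_right hi hd.le)
    exact isFBRWith_of_eq_quantile_conditionalBallot hβ.1 hcm hpq hnonneg hε hd hu hb
  have hmixture (S : Finset (Fin n)) (k : Fin m) :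
      ∑ i : Fin n × (Finset (Fin n) → Fin m),
        ε i.1 * w i.1 i.2 * (if k ≤ i.2 S then 1 else 0) = (β S).prob (upSet k) := by
    simp only [Fintype.sum_prod_type, mul_assoc, ← mul_sum, hmarginal]
    exact sum_mul_prob_conditionalBallot hε hsum hpq S _
  have hnonneg' (i : Fin n × (Finset (Fin n) → Fin m)) : 0 ≤ ε i.1 * w i.1 i.2 :=
    mul_nonneg (hnonneg _) (hw _ _)
  refine decomposable_of_mixture hnonneg' ?_ (f := fun i => fbrOutcome i.2) (fun i hi => ?_)
    fun P => ?_
  · simpa only [Fin.zero_le, if_true, mul_one, upSet_zero, Lottery.prob_univ] using hmixture ∅ 0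
  · exact ⟨(hfbr i hi).unanimous, (hfbr i hi).strategyProof hpq hD⟩
  refine congrFun (eq_of_forall_sum_Ici_eq fun k => ?_)
  rw [sum_sum_mul_indicator]
  calc ∑ a ∈ Ici k, (φ P).1 a = (β (voterSet P k)).prob (upSet k) := by
        rw [← hβ.prob_upSet, upSet_eq_Ici, Lottery.prob]
    _ = _ := by
        rw [← hmixture]
        refine sum_congr rfl fun i _ => ?_
        rcases (hnonneg' i).eq_or_lt with h0 | hi
        · rw [← h0, zero_mul, zero_mul]
        · simp only [mem_Ici, (hfbr i hi).le_iff]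

end Sufficiency

section CoalitionMixtures

variable {κ N : Type*} [Fintype κ] {α : κ → ℝ} {W : κ → Finset N → Prop}
  [∀ k, DecidablePred (W k)]

lemma exists_dictator_of_additive_mixture [Fintype N] {ε : N → ℝ} (hα : ∀ k, 0 < α k)
    (hmono : ∀ k S T, S ⊆ T → W k S → W k T) (huniv : ∀ k, W k univ)
    (huniq : ∀ k i j, W k {i} → W k {j} → i = j)
    (hadd : ∀ S, ∑ k, α k * (if W k S then 1 else 0) = ∑ i ∈ S, ε i) :
    ∃ d : κ → N, ∀ k S, W k S ↔ d k ∈ S := by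
  have hle (k : κ) (S : Finset N) :
      ∑ i ∈ S, (if W k {i} then (1 : ℝ) else 0) ≤ if W k S then 1 else 0 := by
    split_ifs with hS
    · rw [sum_boole, Nat.cast_le_one, card_le_one]
      exact fun i hi j hj => huniq k i j (mem_filter.1 hi).2 (mem_filter.1 hj).2
    · refine (sum_eq_zero fun i hi => if_neg fun h => hS ?_).le
      exact hmono k {i} S (singleton_subset_iff.2 hi) h
  -- Both sides of `hle` have the same average, so they agree for every `k`.
  have heq (k : κ) (S : Finset N) :
      ∑ i ∈ S, (if W k {i} then (1 : ℝ) else 0) = if W k S then 1 else 0 := by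
    have havg : ∑ k, α k * ∑ i ∈ S, (if W k {i} then (1 : ℝ) else 0) =
        ∑ k, α k * (if W k S then 1 else 0) := by
      simp only [mul_sum]
      rw [sum_comm, hadd]
      exact sum_congr rfl fun i _ => (hadd {i}).trans (sum_singleton ε i)
    exact mul_left_cancel₀ (hα k).ne' <| (sum_eq_sum_iff_of_le fun k _ =>
      mul_le_mul_of_nonneg_left (hle k S) (hα k).le).1 havg k (mem_univ k)
  have hwinner (k : κ) (S : Finset N) (hS : W k S) : ∃ i ∈ S, W k {i} := by
    by_contra! hnone
    have h := heq k S
    rw [sum_eq_zero fun i hi => if_neg (hnone i hi), if_pos hS] at h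
    exact zero_ne_one h
  choose d _ hd using fun k => hwinner k univ (huniv k)
  refine ⟨d, fun k S => ⟨fun hS => ?_, fun hdS => hmono k _ S (singleton_subset_iff.2 hdS) (hd k)⟩⟩
  obtain ⟨i, hiS, hi⟩ := hwinner k S hS
  exact huniq k i (d k) hi (hd k) ▸ hiS

lemma monotone_mixture_div_card (hα : ∀ k, 0 ≤ α k)
    (hmono : ∀ k S T, S ⊆ T → W k S → W k T) {d : κ → N} (hd : ∀ k S, W k S → d k ∈ S)
    (hcard : ∀ S T, #S = #T → ∑ k, α k * (if W k S then 1 else 0) =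
      ∑ k, α k * (if W k T then (1 : ℝ) else 0)) :
    Monotone fun S => (∑ k, α k * (if W k S then 1 else 0)) / (#S : ℝ) := by
  classical
  -- `T.erase (d k)` does not contain `d k`, so it is not winning for `k`.
  have hcount (k : κ) (T : Finset N) :
      ∑ j ∈ T, (if W k (T.erase j) then (1 : ℝ) else 0) ≤
        ((#T - 1 : ℕ) : ℝ) * if W k T then 1 else 0 := by
    split_ifs with hT
    · rw [sum_boole, mul_one, Nat.cast_le, ← card_erase_of_mem (hd k T hT)]
      refine card_le_card fun j hj => ?_
      obtain ⟨hjT, hj⟩ := mem_filter.1 hj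
      exact mem_erase.2 ⟨(ne_of_mem_erase (hd k _ hj)).symm, hjT⟩
    · rw [mul_zero]
      exact (sum_eq_zero fun j _ => if_neg fun h => hT (hmono k _ T (erase_subset j T) h)).le
  refine (monotone_iff_forall_covBy _).2 fun S T hST => ?_
  obtain ⟨a, haS, rfl⟩ := covBy_iff_exists_insert.1 hST
  set T := insert a S
  have hTcard : #T = #S + 1 := card_insert_of_notMem haS
  have hnonneg : 0 ≤ ∑ k, α k * (if W k T then (1 : ℝ) else 0) :=
    sum_nonneg fun k _ => mul_nonneg (hα k) (by split_ifs <;> norm_num)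
  obtain rfl | hS := S.eq_empty_or_nonempty
  · simpa only [card_empty, Nat.cast_zero, div_zero] using div_nonneg hnonneg (Nat.cast_nonneg _)
  have hpos : (0 : ℝ) < #S := Nat.cast_pos.2 hS.card_pos
  rw [div_le_div_iff₀ hpos (by rw [hTcard]; positivity), mul_comm, mul_comm _ (#S : ℝ)]
  calc (#T : ℝ) * ∑ k, α k * (if W k S then 1 else 0)
      = ∑ j ∈ T, ∑ k, α k * (if W k (T.erase j) then 1 else 0) := by
        rw [← nsmul_eq_mul, ← sum_const]
        refine sum_congr rfl fun j hj => hcard _ _ ?_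
        rw [card_erase_of_mem hj, hTcard, Nat.add_sub_cancel]
    _ = ∑ k, α k * ∑ j ∈ T, (if W k (T.erase j) then 1 else 0) := by
        rw [sum_comm]
        simp only [mul_sum]
    _ ≤ ∑ k, α k * ((#S : ℝ) * if W k T then 1 else 0) := by
        refine sum_le_sum fun k _ => mul_le_mul_of_nonneg_left ?_ (hα k)
        simpa only [hTcard, Nat.add_sub_cancel] using hcount k T
    _ = #S * ∑ k, α k * (if W k T then 1 else 0) := by
        rw [mul_sum]
        exact sum_congr rfl fun k _ => mul_left_comm _ _ _

end CoalitionMixtures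

section RichDomains

variable {m n : ℕ} {D : Set (Pref m)} {p q : Fin m} {g : Profile D n → Fin m}

lemma le_apply_update_of_refl (hsp : StrategyProof (fun P => degLottery (g P))) {P : Profile D n}
    {i : Fin n} (hi : (P i).1 = Equiv.refl (Fin m)) (Q : D) :
    g P ≤ g (Function.update P i Q) := by
  have := strategyProof_degLottery_iff.1 hsp i P Q
  rwa [hi, prefers_refl_iff, not_lt] at this

lemma monotone_apply_ballotProfile (hsp : StrategyProof (fun P => degLottery (g P)))
    (hD : Diversity D) : Monotone fun S => g (ballotProfile hD S) := by
  refine (monotone_iff_forall_covBy _).2 fun S T hST => ?_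
  obtain ⟨i, hi, rfl⟩ := covBy_iff_exists_insert.1 hST
  rw [ballotProfile_insert]
  exact le_apply_update_of_refl hsp
    (congrArg Subtype.val (ballotProfile_apply_of_notMem hD hi)) _

variable [NeZero m]

lemma apply_ballotProfile_univ (hun : Unanimous (fun P => degLottery (g P))) (hD : Diversity D) :
    g (ballotProfile hD univ) = lastAlt m :=
  degLottery_injective <| hun _ _ fun i => by
    rw [ballotProfile_apply_of_mem hD (mem_univ i), topOf, revPref_zero]

/-- Richness of a domain relative to the thresholds `p` and `q`: besides diversity, two preferences
whose top lies below `a_q` but which rank all of `[a_q, a_m]` above, respectively, the alternatives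
strictly between `a_p` and `a_q` and the alternatives in `[a_1, a_p]`. They are what makes two
voters clash when each of them alone can force the outcome into `[a_q, a_m]`. -/
structure HybridRich (p q : Fin m) (D : Set (Pref m)) : Prop where
  diversity : Diversity D
  exists_right_above_middle : ∃ P ∈ D, P 0 < q ∧ ∀ a b, q ≤ a → p < b → b < q → Prefers P a b
  exists_right_above_left : ∃ P ∈ D, P 0 < q ∧ ∀ a b, q ≤ a → b ≤ p → Prefers P a b

lemma HybridRich.lt (h : HybridRich p q D) : p < q := by
  obtain ⟨P, -, htop, hP⟩ := h.exists_right_above_left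
  by_contra! hqp
  exact (hP q (P 0) le_rfl (htop.le.trans hqp)).asymm (prefers_apply_zero P htop.ne')

/-- The clash: let `j` report a preference with `[a_q, a_m]` above `[a_1, a_p]`. Since `j` could
force `[a_q, a_m]`, the outcome is above `a_p`, and it stays strictly between `a_p` and `a_q` when
`i` reports a preference with `[a_q, a_m]` above the middle. Then `i` cannot force `[a_q, a_m]`. -/
lemma HybridRich.eq_of_le_apply_singleton (h : HybridRich p q D)
    (hsp : StrategyProof (fun P => degLottery (g P)))
    (htops : ∀ P, (∀ i, topOf (P i) < q) → g P < q) {i j : Fin n}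
    (hi : q ≤ g (ballotProfile h.diversity {i})) (hj : q ≤ g (ballotProfile h.diversity {j})) :
    i = j := by
  by_contra hij
  obtain ⟨M, hM, hMtop, hMabove⟩ := h.exists_right_above_middle
  obtain ⟨L, hL, hLtop, hLabove⟩ := h.exists_right_above_left
  let R : D := ⟨revPref m, h.diversity.2⟩
  let O : Profile D n := ballotProfile h.diversity ∅
  have hO (k : Fin n) : O k = ⟨Equiv.refl _, h.diversity.1⟩ :=
    ballotProfile_apply_of_notMem _ (notMem_empty k)
  have hsingle (k : Fin n) : ballotProfile h.diversity {k} = Function.update O k R := by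
    rw [← insert_empty_eq, ballotProfile_insert]
  rw [hsingle] at hi hj
  let A : Profile D n := Function.update O j ⟨L, hL⟩
  have hAi : (A i).1 = Equiv.refl (Fin m) := by simp only [A, Function.update_of_ne hij, hO]
  have hA : p < g A := by
    by_contra! hle
    refine strategyProof_degLottery_iff.1 hsp j A R ?_
    simpa only [A, Function.update_self, Function.update_idem] using hLabove _ _ hj hle
  let A' : Profile D n := Function.update A i ⟨M, hM⟩
  have hA'p : p < g A' := hA.trans_le (le_apply_update_of_refl hsp hAi _)
  have hA'q : g A' < q := htops A' fun k => by
    simp only [A', A, topOf, Function.update_apply]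
    split_ifs
    exacts [hMtop, hLtop, hO k ▸ (Fin.zero_le _).trans_lt hMtop]
  have hB : g (Function.update A i R) < q := by
    by_contra! hle
    refine strategyProof_degLottery_iff.1 hsp i A' R ?_
    simpa only [A', Function.update_self, Function.update_idem] using hMabove _ _ hle hA'p hA'q
  have hOj : (Function.update O i R j).1 = Equiv.refl (Fin m) := by
    rw [Function.update_of_ne (Ne.symm hij), hO]
  have hBi := le_apply_update_of_refl hsp hOj ⟨L, hL⟩
  rw [Function.update_comm hij] at hBi
  exact hB.not_ge (hi.trans hBi)

end RichDomains

section Necessity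

variable {κ : Type*} [Fintype κ] {m n : ℕ} [NeZero m] {D : Set (Pref m)}
  {φ : Profile D n → Lottery m} {f : κ → Profile D n → Fin m} {α : κ → ℝ}
  {β : Finset (Fin n) → Lottery m} {p q : Fin m}

/-- The functions `f k` with weights `α k` decompose `φ` into unanimous and strategy-proof
deterministic rules. The weights sum to one automatically. -/
structure IsDecomposition (φ : Profile D n → Lottery m) (f : κ → Profile D n → Fin m)
    (α : κ → ℝ) : Prop where
  pos : ∀ k, 0 < α k
  unanimous : ∀ k, Unanimous (fun P => degLottery (f k P))
  strategyProof : ∀ k, StrategyProof (fun P => degLottery (f k P))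
  apply_eq : ∀ P a, (φ P).1 a = ∑ k, α k * (if f k P = a then 1 else 0)

namespace IsDecomposition

lemma prob_eq (h : IsDecomposition φ f α) (P : Profile D n) (B : Finset (Fin m)) :
    (φ P).prob B = ∑ k, α k * (if f k P ∈ B then 1 else 0) := by
  rw [← sum_sum_mul_indicator, Lottery.prob, sum_congr rfl fun a _ => h.apply_eq P a]

lemma apply_lt_of_forall_topOf_lt (h : IsDecomposition φ f α) (hβ : IsPFBRWith φ β) {a : Fin m}
    (ha : a ≠ 0) (j : κ) {P : Profile D n} (hlt : ∀ i, topOf (P i) < a) : f j P < a := by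
  by_contra! hle
  have hvoters : voterSet P a = ∅ := filter_false_of_mem fun i _ => (hlt i).not_ge
  have hzero : ∑ k, α k * (if f k P ∈ upSet a then 1 else 0) = 0 := by
    rw [← h.prob_eq, hβ.prob_upSet, hvoters, hβ.1.2, prob_degLottery]
    exact if_neg fun h0 => (Fin.pos_iff_ne_zero.2 ha).not_ge (mem_upSet.1 h0)
  have hj := (sum_eq_zero_iff_of_nonneg fun k _ => mul_nonneg (h.pos k).le
    (by split_ifs <;> norm_num)).1 hzero j (mem_univ j)
  rw [if_pos (mem_upSet.2 hle), mul_one] at hj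
  exact (h.pos j).ne' hj

lemma sum_mul_indicator_ballotProfile (h : IsDecomposition φ f α) (hβ : IsPFBRWith φ β)
    (hD : Diversity D) (S : Finset (Fin n)) (B : Finset (Fin m)) :
    ∑ k, α k * (if f k (ballotProfile hD S) ∈ B then 1 else 0) = (β S).prob B := by
  rw [← h.prob_eq, hβ.apply_ballotProfile hD]

lemma exists_dictator (h : IsDecomposition φ f α) (hβ : IsPFBRWith φ β)
    (hcrd : ConstrainedRD p q β) (hD : HybridRich p q D) :
    ∃ d : κ → Fin n, ∀ k S, q ≤ f k (ballotProfile hD.diversity S) ↔ d k ∈ S := by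
  obtain ⟨ε, -, -, hε⟩ := hcrd
  have hq : q ≠ 0 := ((Fin.zero_le p).trans_lt hD.lt).ne'
  refine exists_dictator_of_additive_mixture h.pos
    (fun k S T hST hS => hS.trans (monotone_apply_ballotProfile (h.strategyProof k) _ hST))
    (fun k => ?_) (fun k i j => hD.eq_of_le_apply_singleton (h.strategyProof k)
      fun _ => h.apply_lt_of_forall_topOf_lt hβ hq k) (ε := ε) fun S => ?_
  · rw [apply_ballotProfile_univ (h.unanimous k)]
    exact le_lastAlt q
  · simp only [← (hε S).1, ← h.sum_mul_indicator_ballotProfile hβ hD.diversity, mem_upSet]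

theorem perCapitaMonotone (h : IsDecomposition φ f α) (hβ : IsPFBRWith φ β)
    (hcrd : ConstrainedRD p q β) (hanon : Anonymous φ) (hD : HybridRich p q D) :
    PerCapitaMonotone p q β := by
  obtain ⟨d, hd⟩ := h.exists_dictator hβ hcrd hD
  have hmono (k : κ) := monotone_apply_ballotProfile (h.strategyProof k) hD.diversity
  have hprob (S : Finset (Fin n)) := h.sum_mul_indicator_ballotProfile hβ hD.diversity S
  have hcard (S T : Finset (Fin n)) (hST : #S = #T) : β S = β T :=
    hβ.ballot_eq_of_card_eq hD.diversity hanon hST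
  intro S T _ hST _
  refine ⟨fun t ht => ?_, fun s hs => ?_⟩
  · have key := monotone_mixture_div_card
      (W := fun k S => f k (ballotProfile hD.diversity S) ∈ upSet t) (fun k => (h.pos k).le)
      (fun k S T hST hS => mem_upSet.2 ((mem_upSet.1 hS).trans (hmono k hST)))
      (fun k S hS => (hd k S).1 (ht.trans (mem_upSet.1 hS)))
      (fun S T hST => by rw [hprob, hprob, hcard S T hST]) hST.subset
    simpa only [hprob] using key
  · have key := monotone_mixture_div_card
      (W := fun k S => f k (ballotProfile hD.diversity Sᶜ) ∈ downSet s) (fun k => (h.pos k).le)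
      (fun k S T hST hS => mem_downSet.2
        ((hmono k (compl_subset_compl.2 hST)).trans (mem_downSet.1 hS)))
      (fun k S hS => by
        by_contra hdS
        exact ((hd k Sᶜ).2 (mem_compl.2 hdS)).not_gt
          (((mem_downSet.1 hS).trans hs).trans_lt hD.lt))
      (fun S T hST => by
        rw [hprob, hprob, hcard Sᶜ Tᶜ (by rw [card_compl, card_compl, hST])]) hST.subset
    simpa only [hprob] using key

end IsDecomposition

end Necessity

section HybridDomain

variable {m : ℕ} [NeZero m] {p q : Fin m}

lemma apply_zero_eq_of_prefers {P : Pref m} {c : Fin m} (h : ∀ a, a ≠ c → Prefers P c a) :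
    P 0 = c := by
  by_contra hne
  exact (h _ hne).asymm (prefers_apply_zero P (Ne.symm hne))

lemma refl_mem_hybridDomain : Equiv.refl (Fin m) ∈ hybridDomain p q := by
  simp only [hybridDomain, Set.mem_ofPred_eq, IsHybridPref, prefers_refl_iff, Equiv.refl_apply,
    Fin.lt_def, Fin.le_def, Fin.ext_iff, ne_eq, Fin.val_zero]
  grind

lemma revPref_mem_hybridDomain : revPref m ∈ hybridDomain p q := by
  simp only [hybridDomain, Set.mem_ofPred_eq, IsHybridPref, prefers_revPref_iff, revPref_zero,
    lastAlt, Fin.lt_def, Fin.le_def, Fin.ext_iff, ne_eq]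
  grind

lemma exists_hybridPref_right_above_middle (hpq : p < q) :
    ∃ P ∈ hybridDomain p q, P 0 < q ∧ ∀ a b, q ≤ a → p < b → b < q → Prefers P a b := by
  obtain ⟨P, hP⟩ := exists_pref_of_key fun a : Fin m => if p < a ∧ a < q then m else (a : ℕ)
  have htop : P 0 = 0 := apply_zero_eq_of_prefers fun a ha => hP 0 a (by grind)
  refine ⟨P, ⟨fun r s hrs h => hP s r ?_, fun _ l hpl hlq hlp => hP p l ?_, fun hq => ?_⟩, ?_,
    fun a b ha hpb hbq => hP a b ?_⟩ <;> rw [htop] at * <;> grind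

lemma exists_hybridPref_right_above_left (hpq : (p : ℕ) + 1 < q) :
    ∃ P ∈ hybridDomain p q, P 0 < q ∧ ∀ a b, q ≤ a → b ≤ p → Prefers P a b := by
  let c : Fin m := ⟨p + 1, hpq.trans q.is_lt⟩
  obtain ⟨P, hP⟩ := exists_pref_of_key fun a : Fin m =>
    if a = c then 0 else if q ≤ a then 1 + (a : ℕ) else if a ≤ p then 3 * m - a else 4 * m
  have htop : P 0 = c := apply_zero_eq_of_prefers fun a ha => hP c a (by grind)
  refine ⟨P, ⟨fun r s hrs h => hP s r ?_, fun hp => ?_, fun hq => ?_⟩, ?_,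
    fun a b ha hb => hP a b ?_⟩ <;> rw [htop] at * <;> grind

lemma hybridRich_hybridDomain (hpq : (p : ℕ) + 1 < q) : HybridRich p q (hybridDomain p q) where
  diversity := ⟨refl_mem_hybridDomain, revPref_mem_hybridDomain⟩
  exists_right_above_middle := exists_hybridPref_right_above_middle (Fin.lt_def.2 (by lia))
  exists_right_above_left := exists_hybridPref_right_above_left hpq

end HybridDomain

end PFBRPaper

theorem decomposability_iff_per_capita_monotone_general (m n : ℕ) [NeZero m] (p q : Fin m)
    (D : Set (Pref m)) (hD : D ⊆ hybridDomain p q) (hrich : HybridRich p q D)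
    (φ : Profile D n → Lottery m) (β : Finset (Fin n) → Lottery m)
    (hβ : IsPFBRWith φ β) (hcrd : ConstrainedRD p q β) (hanon : Anonymous φ) :
    Decomposable φ ↔ PerCapitaMonotone p q β := by
  constructor
  · rintro ⟨r, f, α, hpos, -, hf, hφ⟩
    have hdec : IsDecomposition φ f α := ⟨hpos, fun k => (hf k).1, fun k => (hf k).2, hφ⟩
    exact hdec.perCapitaMonotone hβ hcrd hanon hrich
  · intro hpc
    have hunif := hcrd.uniform fun S T => hβ.ballot_eq_of_card_eq hrich.diversity hanon
    exact (hpc.conditionallyMonotone hβ.1 hunif).decomposable hD hrich.lt hβ hcrd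

/-- An anonymous `(p,q)`-PFBR (`1 < q - p < m - 1`) is decomposable iff
its probabilistic ballots satisfy per-capita monotonicity w.r.t. `a_p` and `a_q`. -/
theorem decomposability_iff_per_capita_monotone (m n : ℕ) [NeZero m] (hm : 3 ≤ m) (hn : 2 ≤ n)
    (p q : Fin m) (hgap1 : (p : ℕ) + 1 < (q : ℕ)) (hgap2 : (q : ℕ) - (p : ℕ) < m - 1)
    (φ : Profile (hybridDomain p q) n → Lottery m)
    (β : Finset (Fin n) → Lottery m)
    (hβ : IsPFBRWith φ β) (hcrd : ConstrainedRD p q β)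
    (hanon : Anonymous φ) :
    Decomposable φ ↔ PerCapitaMonotone p q β := by
  exact decomposability_iff_per_capita_monotone_general m n p q _ subset_rfl
    (hybridRich_hybridDomain hgap1) φ β hβ hcrd hanon
end
end

section
/- Let D be a regular domain and let a_p, a_t, a_s ∈ A be pairwise distinct alternatives such that a_t belongs to every vertex-path in Π(a_p, a_s). Then for every preference P ∈ D: if r_1(P) = a_p then a_t P a_s, and if r_1(P) = a_s then a_t P a_p. -/
open Finset

noncomputable section

open PFBRPaper

/-!
Along a path of adjacent preferences the top-ranked alternative either stays put or moves along an
edge of `G_≈^A(D)`, so the tops along a path in `D` from `P` to `P'` trace out a walk from `r_1(P)`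
to `r_1(P')`. If `v` lies on every vertex-path between these two tops, then `v` must be top-ranked
somewhere along the path. When some `x` is ranked above `v` at both ends, a path with no
`{x, v}`-restoration keeps `x` above `v` throughout, so `v` never gets to the top. Hence nothing is
ranked above `v` by both `P` and `P'`; the claim is the case where `x` is the top of one of them.
-/

theorem exists_walk_support_subset_image {V : Type*} {G : SimpleGraph V} {f : ℕ → V} {n : ℕ}
    (hf : ∀ i < n, f i = f (i + 1) ∨ G.Adj (f i) (f (i + 1))) :
    ∃ p : G.Walk (f 0) (f n), ∀ x ∈ p.support, x ∈ f '' Set.Iic n := by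
  induction n with
  | zero => exact ⟨.nil, by simp⟩
  | succ n ih =>
    obtain ⟨p, hp⟩ := ih fun i hi => hf i (by omega)
    have hp' : ∀ x ∈ p.support, x ∈ f '' Set.Iic (n + 1) := fun x hx =>
      Set.image_mono (Set.Iic_subset_Iic.2 n.le_succ) (hp x hx)
    obtain heq | hadj := hf n n.lt_succ_self
    · exact ⟨p.copy rfl heq, by simpa only [SimpleGraph.Walk.support_copy] using hp'⟩
    · refine ⟨p.concat hadj, fun x hx => ?_⟩
      rw [SimpleGraph.Walk.support_concat, List.mem_append, List.mem_singleton] at hx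
      obtain hx | rfl := hx
      · exact hp' x hx
      · exact Set.mem_image_of_mem f Set.self_mem_Iic

namespace PFBRPaper

variable {m : ℕ} {P P' : Pref m} {D : Set (Pref m)} {π : ℕ → Pref m} {n : ℕ} {a b v : Fin m}

theorem not_prefers_iff (hab : a ≠ b) : ¬ Prefers P a b ↔ Prefers P b a :=
  not_lt.trans (P.symm.injective.ne hab.symm).le_iff_lt

theorem NoRestoration.prefers_of_le_of_le {i j k : ℕ} (h : NoRestoration π n a b)
    (hi : Prefers (π i) a b) (hk : Prefers (π k) a b) (hij : i ≤ j) (hjk : j ≤ k) (hkn : k < n) :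
    Prefers (π j) a b := by
  by_contra hj
  have hab : a ≠ b := ne_of_apply_ne _ hi.ne
  have hij' : i < j := hij.lt_of_ne fun e => hj (e ▸ hi)
  have hjk' : j < k := hjk.lt_of_ne fun e => hj (e ▸ hk)
  exact (h i j k hij' hjk' hkn).1 ⟨hi, (not_prefers_iff hab).1 hj, hk⟩

variable [NeZero m]

theorem not_prefers_top : ¬ Prefers P a (P 0) := by
  simp only [Prefers, Equiv.symm_apply_apply, Fin.not_lt_zero, not_false_eq_true]

theorem prefers_top (h : P 0 ≠ b) : Prefers P (P 0) b :=
  (not_prefers_iff h.symm).1 not_prefers_top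

theorem StronglyConnected.symm (h : StronglyConnected D a b) : StronglyConnected D b a := by
  obtain ⟨hab, P, hP, P', hP', h₀, h₁, h₀', h₁', hrest⟩ := h
  exact ⟨hab.symm, P', hP', P, hP, h₀', h₁', h₀, h₁, fun k hk => (hrest k hk).symm⟩

/-- The graph `G_≈^A(D)` on all alternatives, whose edges are the strongly connected pairs. -/
def strongConnectionGraph (D : Set (Pref m)) : SimpleGraph (Fin m) where
  Adj := StronglyConnected D
  symm := ⟨fun _ _ => StronglyConnected.symm⟩
  loopless := ⟨fun _ h => h.1 rfl⟩

theorem vertexPathBetween_support {p : (strongConnectionGraph D).Walk a b} (hp : p.IsPath) :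
    VertexPathBetween D Set.univ a b p.support := by
  refine ⟨⟨p.support_ne_nil, hp.support_nodup, fun x _ => Set.mem_univ x,
    p.isChain_adj_support⟩, ?_, ?_⟩
  · rw [List.head?_eq_some_head p.support_ne_nil, p.head_support]
  · rw [List.getLast?_eq_some_getLast p.support_ne_nil, p.getLast_support]

theorem Adjacent.top_eq_or_stronglyConnected (h : Adjacent P P') (hP : P ∈ D) (hP' : P' ∈ D) :
    P 0 = P' 0 ∨ StronglyConnected D (P 0) (P' 0) := by
  obtain ⟨-, k, hk, hlower, hraise, hrest⟩ := h
  obtain rfl | hk₀ := k.eq_zero_or_pos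
  · have zero_eq : (⟨0, Nat.lt_of_succ_lt hk⟩ : Fin m) = 0 := rfl
    have one_eq : (⟨0 + 1, hk⟩ : Fin m) = 1 := Fin.ext (Nat.mod_eq_of_lt hk).symm
    rw [zero_eq, one_eq] at hlower hraise
    have htop : P 0 ≠ P' 0 := by
      rw [← hraise, ← zero_eq, ← one_eq]
      exact P.injective.ne (Fin.ne_of_val_ne Nat.zero_ne_one)
    exact .inr ⟨htop, P, hP, P', hP', rfl, hraise, rfl, hlower.symm,
      fun l hl => hrest l (by omega) (by omega)⟩
  · exact .inl (hrest 0 (by rw [Fin.val_zero]; omega) (by rw [Fin.val_zero]; omega))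

theorem IsPath.exists_top_eq (hπ : IsPath D P P' π n)
    (hv : ∀ l, VertexPathBetween D Set.univ (P 0) (P' 0) l → v ∈ l) :
    ∃ i < n, π i 0 = v := by
  obtain ⟨hn, hmem, -, rfl, rfl, hadj⟩ := hπ
  have hstep : ∀ i < n - 1,
      π i 0 = π (i + 1) 0 ∨ (strongConnectionGraph D).Adj (π i 0) (π (i + 1) 0) := fun i hi =>
    (hadj i (by omega)).top_eq_or_stronglyConnected (hmem i (by omega)) (hmem (i + 1) (by omega))
  obtain ⟨p, hp⟩ := exists_walk_support_subset_image (f := fun i => π i 0) hstep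
  have hvp : v ∈ p.bypass.support := hv _ (vertexPathBetween_support p.bypass_isPath)
  obtain ⟨i, hi, hiv⟩ := hp v (p.support_bypass_subset_support hvp)
  exact ⟨i, by rw [Set.mem_Iic] at hi; omega, hiv⟩

theorem NoRestorationDomain.not_prefers_and_prefers (hD : NoRestorationDomain D)
    (hP : P ∈ D) (hP' : P' ∈ D) (hne : P ≠ P')
    (hv : ∀ l, VertexPathBetween D Set.univ (P 0) (P' 0) l → v ∈ l) :
    ¬ (Prefers P a v ∧ Prefers P' a v) := by
  rintro ⟨ha, ha'⟩
  obtain ⟨π, n, hπ, hnr⟩ := hD P hP P' hP' hne a v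
  obtain ⟨i, hi, rfl⟩ := hπ.exists_top_eq hv
  obtain ⟨-, -, -, rfl, rfl, -⟩ := hπ
  exact not_prefers_top <|
    hnr.prefers_of_le_of_le ha ha' i.zero_le (Nat.le_sub_one_of_lt hi) (by omega)

end PFBRPaper

theorem preference_restriction_general {m : ℕ} [NeZero m] {D : Set (Pref m)}
    (hrich : MinimallyRich D) (hD : NoRestorationDomain D)
    {u v w : Fin m} (huv : u ≠ v) (hvw : v ≠ w) (huw : u ≠ w)
    (hmid : ∀ l, VertexPathBetween D Set.univ u w l → v ∈ l) :
    ∀ P ∈ D, (P 0 = u → Prefers P v w) ∧ (P 0 = w → Prefers P v u) := by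
  refine fun P hP => ⟨?_, ?_⟩
  · rintro rfl
    obtain ⟨P', hP', rfl⟩ := hrich w
    have hne : P ≠ P' := ne_of_apply_ne (· 0) huw
    exact (not_prefers_iff hvw.symm).1 fun hwv =>
      hD.not_prefers_and_prefers hP hP' hne hmid ⟨hwv, prefers_top hvw.symm⟩
  · rintro rfl
    obtain ⟨P', hP', rfl⟩ := hrich u
    have hne : P' ≠ P := ne_of_apply_ne (· 0) huw
    exact (not_prefers_iff huv).1 fun huv' =>
      hD.not_prefers_and_prefers hP' hP hne hmid ⟨prefers_top huv, huv'⟩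

/-- If `v` belongs to every vertex-path of `Π(u, w)`, then any preference
in the regular domain with top `u` prefers `v` to `w`, and any preference with top `w`
prefers `v` to `u`. -/
theorem preference_restriction (m : ℕ) [NeZero m] (hm : 3 ≤ m)
    (D : Set (Pref m)) (hD : RegularDomain D)
    (u v w : Fin m) (huv : u ≠ v) (hvw : v ≠ w) (huw : u ≠ w)
    (hmid : ∀ l, VertexPathBetween D Set.univ u w l → v ∈ l) :
    ∀ P ∈ D, (P 0 = u → Prefers P v w) ∧ (P 0 = w → Prefers P v u) :=
  preference_restriction_general hD.1 hD.2.2 huv hvw huw hmid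
end
end
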